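/- Let G be a principal ample groupoid with compact unit space, and let K be a compact open subset of G containing G^0. Then there exists a K-Lebesgue colouring (G_0,…,G_d) of G. -/

import Mathlib

noncomputable section

open Function Set

attribute [local instance] Classical.propDecidable

universe u v w

/-- `ℤ[Y]`: the set of compactly supported continuous `ℤ`-valued functions on a space `Y`
(`ℤ` carries the discrete topology). -/
def ccZ (Y : Type v) [TopologicalSpace Y] : Set (Y → ℤ) :=
  {f | Continuous f ∧ HasCompactSupport f}

/-- `ℤ[Y]` as an additive subgroup of the group of all functions `Y → ℤ`. -/
def ccZSub (Y : Type v) [TopologicalSpace Y] : AddSubgroup (Y → ℤ) where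
  carrier := ccZ Y
  add_mem' {a b} ha hb := ⟨ha.1.add hb.1, ha.2.add hb.2⟩
  zero_mem' := ⟨continuous_const, by
    have h : tsupport (0 : Y → ℤ) = ∅ := by simp [tsupport]
    unfold HasCompactSupport
    rw [h]; exact isCompact_empty⟩
  neg_mem' {a} ha := ⟨ha.1.neg, ha.2.neg⟩

@[simp] lemma mem_ccZSub {Y : Type v} [TopologicalSpace Y] (f : Y → ℤ) :
    f ∈ ccZSub Y ↔ f ∈ ccZ Y := Iff.rfl

/-- The pushforward `φ_*(a)(y) = ∑_{x ∈ φ⁻¹(y)} a x` of a function along a map. -/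
def pushf {X : Type v} {Y : Type w} (φ : X → Y) (a : X → ℤ) : Y → ℤ :=
  fun y => ∑ᶠ x ∈ φ ⁻¹' {y}, a x

/-- The generated equivalence relation. -/
inductive RelGen {α : Sort*} (r : α → α → Prop) : α → α → Prop
  | rel {x y} : r x y → RelGen r x y
  | refl (x) : RelGen r x x
  | symm {x y} : RelGen r x y → RelGen r y x
  | trans {x y z} : RelGen r x y → RelGen r y z → RelGen r x z

/-- The purely algebraic data of a topological groupoid, with arrow space `G`:
the set of units, source and range maps (valued in units), a (junk-total)
partially defined composition, and inversion. -/
structure GroupoidData (G : Type u) where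
  unitSpace : Set G
  source : G → G
  range : G → G
  mul : G → G → G
  inv : G → G

namespace GroupoidData

variable {G : Type u} (D : GroupoidData G)

/-- The product of two subsets of a groupoid. -/
def setMul (A B : Set G) : Set G :=
  {w | ∃ a ∈ A, ∃ b ∈ B, D.source a = D.range b ∧ w = D.mul a b}

/-- A bisection: a subset on which both the source and the range map are injective. -/
def IsBisection (B : Set G) : Prop := Set.InjOn D.source B ∧ Set.InjOn D.range B

/-- Membership in the subgroupoid generated by a subset `A` of `G`. -/
inductive InSubgroupoid (A : Set G) : G → Prop
  | base {g} : g ∈ A → InSubgroupoid A g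
  | inv {g} : InSubgroupoid A g → InSubgroupoid A (D.inv g)
  | mul {g h} : InSubgroupoid A g → InSubgroupoid A h → D.source g = D.range h →
      InSubgroupoid A (D.mul g h)

/-- `G` is a (locally compact, Hausdorff, étale) ample groupoid: all the algebraic groupoid
axioms hold, the structure maps are suitably continuous, the source and range maps are local
homeomorphisms onto the open unit space (étaleness), and the compact open bisections form a
basis for the topology (ampleness). -/
structure IsAmpleGroupoid [TopologicalSpace G] : Prop where
  t2 : T2Space G
  locallyCompact : LocallyCompactSpace G
  source_mem : ∀ g, D.source g ∈ D.unitSpace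
  range_mem : ∀ g, D.range g ∈ D.unitSpace
  source_unit : ∀ x ∈ D.unitSpace, D.source x = x
  range_unit : ∀ x ∈ D.unitSpace, D.range x = x
  source_mul : ∀ g h, D.source g = D.range h → D.source (D.mul g h) = D.source h
  range_mul : ∀ g h, D.source g = D.range h → D.range (D.mul g h) = D.range g
  mul_assoc : ∀ g h k, D.source g = D.range h → D.source h = D.range k →
      D.mul (D.mul g h) k = D.mul g (D.mul h k)
  source_inv : ∀ g, D.source (D.inv g) = D.range g
  range_inv : ∀ g, D.range (D.inv g) = D.source g
  inv_mul : ∀ g, D.mul (D.inv g) g = D.source g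
  mul_inv : ∀ g, D.mul g (D.inv g) = D.range g
  unit_mul : ∀ g, D.mul (D.range g) g = g
  mul_unit : ∀ g, D.mul g (D.source g) = g
  continuous_inv : Continuous D.inv
  continuous_mul : Continuous fun p : {p : G × G // D.source p.1 = D.range p.2} =>
      D.mul p.1.1 p.1.2
  open_unitSpace : IsOpen D.unitSpace
  etale_source : IsLocalHomeomorph D.source
  etale_range : IsLocalHomeomorph D.range
  ample : ∀ g : G, ∀ U : Set G, IsOpen U → g ∈ U →
      ∃ B : Set G, g ∈ B ∧ B ⊆ U ∧ IsOpen B ∧ IsCompact B ∧ D.IsBisection B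

/-- A groupoid is principal if every arrow with equal range and source is a unit. -/
def IsPrincipal : Prop := ∀ g, D.source g = D.range g → g ∈ D.unitSpace

/-- `G` has dynamic asymptotic dimension at most `d`: for every relatively compact open
subset `K` of `G` there are `d+1` open subsets of the unit space covering `r(K) ∪ s(K)` such
that the subgroupoid generated by the elements of `K` with source and range in one of these
sets is relatively compact. -/
def DadLE [TopologicalSpace G] (d : ℕ) : Prop :=
  ∀ K : Set G, IsOpen K → IsCompact (closure K) →
    ∃ U : Fin (d + 1) → Set G,
      (∀ i, IsOpen (U i) ∧ U i ⊆ D.unitSpace) ∧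
      (D.range '' K ∪ D.source '' K ⊆ ⋃ i, U i) ∧
      ∀ i, IsCompact (closure
        {g | D.InSubgroupoid {g ∈ K | D.source g ∈ U i ∧ D.range g ∈ U i} g})

/-! ### Matui's complex computing the Crainic–Moerdijk groupoid homology `H_*(G)` -/

/-- The space `G^(n)` of composable `n`-tuples. -/
def Comps (n : ℕ) : Set (Fin n → G) :=
  {v | ∀ (j : Fin n) (h : (j : ℕ) + 1 < n), D.source (v j) = D.range (v ⟨(j : ℕ) + 1, h⟩)}

/-- The face maps of Matui's complex on tuples:
`d_0` drops the first entry, `d_{n+1}` drops the last one, and the intermediate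
`d_i` compose two consecutive entries. -/
def dface (n : ℕ) (i : Fin (n + 2)) (v : Fin (n + 1) → G) : Fin n → G := fun j =>
  if (j : ℕ) + 1 < (i : ℕ) then v j.castSucc
  else if (j : ℕ) + 1 = (i : ℕ) then D.mul (v j.castSucc) (v j.succ)
  else v j.succ

/-- The spaces of Matui's complex: `G^0` in degree `0`, and `G^(n)` in degree `n ≥ 1`. -/
def MSp : ℕ → Type u
  | 0 => ↥(D.unitSpace)
  | (n + 1) => ↥(D.Comps (n + 1))

instance [TopologicalSpace G] (n : ℕ) : TopologicalSpace (D.MSp n) := by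
  cases n with
  | zero => exact (inferInstance : TopologicalSpace ↥(D.unitSpace))
  | succ n => exact (inferInstance : TopologicalSpace ↥(D.Comps (n + 1)))

/-- The boundary maps of Matui's complex, given by alternating sums of pushforwards
along the face maps (in degree one, `∂₁ = s_* - r_*`). -/
def mBdry : (n : ℕ) → ((D.MSp (n + 1)) → ℤ) → (D.MSp n) → ℤ
  | 0, a => fun u =>
      (∑ᶠ x ∈ {x : ↥(D.Comps 1) | D.source (x.1 0) = u.1}, a x)
        - ∑ᶠ x ∈ {x : ↥(D.Comps 1) | D.range (x.1 0) = u.1}, a x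
  | (n + 1), a => fun y =>
      ∑ i : Fin (n + 3), (-1 : ℤ) ^ (i : ℕ) *
        ∑ᶠ x ∈ {x : ↥(D.Comps (n + 2)) | D.dface (n + 1) i x.1 = y.1}, a x

variable [TopologicalSpace G]

/-- The cycle subgroup of Matui's complex in degree `n`. -/
def mCycles : (n : ℕ) → AddSubgroup ((D.MSp n) → ℤ)
  | 0 => ccZSub (D.MSp 0)
  | (n + 1) => AddSubgroup.closure {a | a ∈ ccZ (D.MSp (n + 1)) ∧ D.mBdry n a = 0}

/-- The boundary subgroup of Matui's complex in degree `n`. -/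
def mBdries (n : ℕ) : AddSubgroup ((D.MSp n) → ℤ) :=
  AddSubgroup.closure {c | ∃ a ∈ ccZ (D.MSp (n + 1)), D.mBdry n a = c}

/-- The groupoid homology `H_n(G)` (Crainic–Moerdijk homology, computed by Matui's complex). -/
def Homology (n : ℕ) : Type u :=
  (D.mCycles n) ⧸ AddSubgroup.comap (D.mCycles n).subtype (D.mBdries n)

instance (n : ℕ) : AddCommGroup (D.Homology n) :=
  QuotientAddGroup.Quotient.addCommGroup _

/-- The homology class of a cycle. -/
def hcls {n : ℕ} (a : (D.MSp n) → ℤ) (ha : a ∈ D.mCycles n) : D.Homology n :=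
  QuotientAddGroup.mk ⟨a, ha⟩

end GroupoidData
namespace GroupoidData

variable {G : Type u} {D : GroupoidData G}
variable (D) in

/-- A colouring of an ample groupoid `G` with compact unit space: a finite ordered
collection `(G_0, …, G_d)` of compact open subgroupoids whose unit spaces cover `G⁰`. -/
structure Colouring [TopologicalSpace G] (d : ℕ) where
  sub : Fin (d + 1) → Set G
  isCompact : ∀ i, IsCompact (sub i)
  isOpen : ∀ i, IsOpen (sub i)
  inv_mem : ∀ i, ∀ g ∈ sub i, D.inv g ∈ sub i
  mul_mem : ∀ i, ∀ g h, g ∈ sub i → h ∈ sub i → D.source g = D.range h → D.mul g h ∈ sub i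
  source_mem : ∀ i, ∀ g ∈ sub i, D.source g ∈ sub i
  range_mem : ∀ i, ∀ g ∈ sub i, D.range g ∈ sub i
  covers : D.unitSpace ⊆ ⋃ i, (sub i ∩ D.unitSpace)

/-- A colouring is `K`-Lebesgue if for every unit `x` some colour `G_i` contains `G^x ∩ K`. -/
def Colouring.IsLebesgue [TopologicalSpace G] {D : GroupoidData G} {d : ℕ}
    (C : D.Colouring d) (K : Set G) : Prop :=
  ∀ x ∈ D.unitSpace, ∃ i, {g | D.range g = x} ∩ K ⊆ C.sub i

/-- A colouring is `K`-bounded if every colour is contained in `K`. -/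
def Colouring.IsBounded [TopologicalSpace G] {D : GroupoidData G} {d : ℕ}
    (C : D.Colouring d) (K : Set G) : Prop :=
  ∀ i, C.sub i ⊆ K

end GroupoidData

/-!
For a set `T` of arrows on which the source map is injective, `T⁻¹T` is a subgroupoid: if
`s(b) = s(c)` with `b, c ∈ T` then `b = c`, so `(a⁻¹b)(c⁻¹e) = a⁻¹e`. It is compact open when `T`
is. If `V` is a set of units and `T = K ∩ r⁻¹(V)`, then `V ⊆ T` because `G⁰ ⊆ K`, and therefore
`G^x ∩ K ⊆ T⁻¹T` for all `x ∈ V`. Principality makes the source map injective on the fibre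
`K ∩ r⁻¹(x)`, and since it is locally injective, compactness spreads this to `K ∩ r⁻¹(V)` for a
neighbourhood `V` of `x`. Finitely many such `V` cover the compact unit space.
-/

open scoped Topology

section Topology

variable {X : Type u} {Y : Type v} {Z : Type w}
  [TopologicalSpace X] [TopologicalSpace Y] [TopologicalSpace Z]

lemma isOpenMap_pullback_fst {f : X → Z} {g : Y → Z} (hf : Continuous f) (hg : IsOpenMap g) :
    IsOpenMap (Function.Pullback.fst : f.Pullback g → X) := by
  rintro _ ⟨W, hW, rfl⟩
  refine isOpen_iff_mem_nhds.2 ?_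
  rintro _ ⟨⟨⟨x, y⟩, hxy : f x = g y⟩, hmem, rfl⟩
  obtain ⟨N, M, hN, hM, hxN, hyM, hNM⟩ := isOpen_prod_iff.1 hW x y hmem
  have hopen : IsOpen (N ∩ f ⁻¹' (g '' M)) := hN.inter ((hg M hM).preimage hf)
  refine Filter.mem_of_superset (hopen.mem_nhds ⟨hxN, y, hyM, hxy.symm⟩) ?_
  rintro x' ⟨hx'N, y', hy'M, hgy'⟩
  exact ⟨⟨(x', y'), hgy'.symm⟩, hNM ⟨hx'N, hy'M⟩, rfl⟩

lemma exists_mem_nhds_injOn_inter_preimage [T2Space Y] [T2Space Z]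
    {f : X → Y} {p : X → Z} (hloc : IsLocallyInjective f) (hf : Continuous f) (hp : Continuous p)
    {K : Set X} (hK : IsCompact K) {z : Z} (hinj : InjOn f (K ∩ p ⁻¹' {z})) :
    ∃ V ∈ 𝓝 z, InjOn f (K ∩ p ⁻¹' V) := by
  have hfibre : IsCompact (K ∩ p ⁻¹' {z}) := hK.inter_right (isClosed_singleton.preimage hp)
  obtain ⟨U, hU, hfibreU, hinjU⟩ := hinj.exists_isOpen_superset hfibre
    (fun x _ ↦ hf.continuousAt) (fun x _ ↦ isLocallyInjective_iff_nhds.1 hloc x)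
  have hclosed : IsClosed (p '' (K \ U)) := ((hK.diff hU).image hp).isClosed
  refine ⟨(p '' (K \ U))ᶜ, hclosed.isOpen_compl.mem_nhds ?_, hinjU.mono ?_⟩
  · rintro ⟨x, ⟨hxK, hxU⟩, hxz⟩
    exact hxU (hfibreU ⟨hxK, hxz⟩)
  · rintro x ⟨hxK, hxV⟩
    by_contra hxU
    exact hxV ⟨x, ⟨hxK, hxU⟩, rfl⟩

end Topology

namespace GroupoidData

variable {G : Type u} {D : GroupoidData G}

variable (D) in
/-- A subgroupoid, as a set of arrows. Closure under source and range is not a field because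
`s(g) = g⁻¹g` and `r(g) = gg⁻¹`. -/
structure IsSubgroupoid (A : Set G) : Prop where
  inv_mem : ∀ g ∈ A, D.inv g ∈ A
  mul_mem : ∀ g h, g ∈ A → h ∈ A → D.source g = D.range h → D.mul g h ∈ A

variable (D) in
/-- A compact open subgroupoid: what a single colour of a colouring has to be. -/
structure IsCompactOpenSubgroupoid [TopologicalSpace G] (A : Set G) : Prop
    extends D.IsSubgroupoid A where
  isCompact : IsCompact A
  isOpen : IsOpen A

variable (D) in
/-- The set `T⁻¹T` of products `a⁻¹b` with `a, b ∈ T` and `r(a) = r(b)`. The colours are taken of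
this form. -/
def invMulSelf (T : Set G) : Set G := D.setMul (D.inv '' T) T

lemma isCompactOpenSubgroupoid_empty [TopologicalSpace G] : D.IsCompactOpenSubgroupoid ∅ where
  inv_mem _ := False.elim
  mul_mem _ _ := False.elim
  isCompact := isCompact_empty
  isOpen := isOpen_empty

namespace IsAmpleGroupoid

variable [TopologicalSpace G]

lemma eq_inv_of_mul_eq_range (hD : D.IsAmpleGroupoid) {g h : G} (hcomp : D.source g = D.range h)
    (hmul : D.mul g h = D.range g) : h = D.inv g :=
  calc h = D.mul (D.mul (D.inv g) g) h := by rw [hD.inv_mul, hcomp, hD.unit_mul]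
    _ = D.mul (D.inv g) (D.source (D.inv g)) := by
      rw [hD.mul_assoc _ _ _ (hD.source_inv g) hcomp, hmul, hD.source_inv]
    _ = D.inv g := hD.mul_unit _

lemma inv_inv (hD : D.IsAmpleGroupoid) (g : G) : D.inv (D.inv g) = g :=
  (hD.eq_inv_of_mul_eq_range (hD.source_inv g) (by rw [hD.inv_mul, hD.range_inv])).symm

lemma inv_of_mem_unitSpace (hD : D.IsAmpleGroupoid) {x : G} (hx : x ∈ D.unitSpace) :
    D.inv x = x := by
  have hrange := hD.range_unit x hx
  refine (hD.eq_inv_of_mul_eq_range ((hD.source_unit x hx).trans hrange.symm) ?_).symm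
  simpa only [hrange] using hD.unit_mul x

lemma mul_inv_cancel_right (hD : D.IsAmpleGroupoid) {g h : G} (hcomp : D.source g = D.range h) :
    D.mul (D.mul g h) (D.inv h) = g := by
  rw [hD.mul_assoc _ _ _ hcomp (hD.range_inv h).symm, hD.mul_inv, ← hcomp, hD.mul_unit]

lemma inv_mul_cancel_right (hD : D.IsAmpleGroupoid) {g h : G} (hcomp : D.source g = D.source h) :
    D.mul (D.mul g (D.inv h)) h = g := by
  rw [hD.mul_assoc _ _ _ (hcomp.trans (hD.range_inv h).symm) (hD.source_inv h), hD.inv_mul,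
    ← hcomp, hD.mul_unit]

lemma mul_inv_rev (hD : D.IsAmpleGroupoid) {g h : G} (hcomp : D.source g = D.range h) :
    D.inv (D.mul g h) = D.mul (D.inv h) (D.inv g) := by
  have hcomp' : D.source (D.inv h) = D.range (D.inv g) := by
    rw [hD.source_inv, hD.range_inv, hcomp]
  refine (hD.eq_inv_of_mul_eq_range ?_ ?_).symm
  · rw [hD.source_mul _ _ hcomp, hD.range_mul _ _ hcomp', hD.range_inv]
  · rw [← hD.mul_assoc _ _ _ (by rw [hD.source_mul _ _ hcomp, hD.range_inv]) hcomp',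
      hD.mul_inv_cancel_right hcomp, hD.mul_inv, hD.range_mul _ _ hcomp]

lemma eq_of_source_eq_of_range_eq (hD : D.IsAmpleGroupoid) (hP : D.IsPrincipal) {g h : G}
    (hsource : D.source g = D.source h) (hrange : D.range g = D.range h) : g = h := by
  have hcomp : D.source g = D.range (D.inv h) := hsource.trans (hD.range_inv h).symm
  have hunit : D.mul g (D.inv h) ∈ D.unitSpace := hP _ <| by
    rw [hD.source_mul _ _ hcomp, hD.range_mul _ _ hcomp, hD.source_inv, hrange]
  have hmul : D.mul g (D.inv h) = D.range h := by
    rw [← hD.range_unit _ hunit, hD.range_mul _ _ hcomp, hrange]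
  rw [← hD.inv_mul_cancel_right hsource, hmul, hD.unit_mul]

lemma isCompact_setMul (hD : D.IsAmpleGroupoid) {A B : Set G} (hA : IsCompact A)
    (hB : IsCompact B) : IsCompact (D.setMul A B) := by
  have := hD.t2
  have hclosed : IsClosed {p : G × G | D.source p.1 = D.range p.2} :=
    isClosed_eq (hD.etale_source.continuous.comp continuous_fst)
      (hD.etale_range.continuous.comp continuous_snd)
  have himage := (hclosed.isClosedEmbedding_subtypeVal.isCompact_preimage (hA.prod hB)).image
    hD.continuous_mul
  convert himage using 1
  ext w
  constructor
  · rintro ⟨a, ha, b, hb, hab, rfl⟩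
    exact ⟨⟨(a, b), hab⟩, ⟨ha, hb⟩, rfl⟩
  · rintro ⟨⟨⟨a, b⟩, hab⟩, ⟨ha, hb⟩, rfl⟩
    exact ⟨a, ha, b, hb, hab, rfl⟩

lemma mem_setMul_iff_exists_mul_inv_mem (hD : D.IsAmpleGroupoid) {A B : Set G} {w : G} :
    w ∈ D.setMul A B ↔ ∃ b ∈ B, D.source w = D.source b ∧ D.mul w (D.inv b) ∈ A := by
  constructor
  · rintro ⟨a, ha, b, hb, hab, rfl⟩
    exact ⟨b, hb, hD.source_mul _ _ hab, by rwa [hD.mul_inv_cancel_right hab]⟩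
  · rintro ⟨b, hb, hwb, hmem⟩
    refine ⟨_, hmem, b, hb, ?_, (hD.inv_mul_cancel_right hwb).symm⟩
    rw [hD.source_mul _ _ (hwb.trans (hD.range_inv b).symm), hD.source_inv]

lemma continuous_mul_inv (hD : D.IsAmpleGroupoid) :
    Continuous fun p : D.source.Pullback D.source ↦ D.mul p.fst (D.inv p.snd) := by
  have hpair : Continuous fun p : D.source.Pullback D.source ↦
      (⟨(p.fst, D.inv p.snd), p.2.trans (hD.range_inv _).symm⟩ :
        D.source.Pullback D.range) :=
    (continuous_fst.comp continuous_subtype_val).prodMk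
      (hD.continuous_inv.comp (continuous_snd.comp continuous_subtype_val)) |>.subtype_mk _
  exact hD.continuous_mul.comp hpair

lemma isOpen_setMul (hD : D.IsAmpleGroupoid) {A B : Set G} (hA : IsOpen A) (hB : IsOpen B) :
    IsOpen (D.setMul A B) := by
  have hfst : IsOpenMap (Function.Pullback.fst : D.source.Pullback D.source → G) :=
    isOpenMap_pullback_fst hD.etale_source.continuous hD.etale_source.isOpenMap
  have hpairs : IsOpen {p : D.source.Pullback D.source |
      p.snd ∈ B ∧ D.mul p.fst (D.inv p.snd) ∈ A} :=
    (hB.preimage (continuous_snd.comp continuous_subtype_val)).inter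
      (hA.preimage hD.continuous_mul_inv)
  convert hfst _ hpairs using 1
  ext w
  rw [hD.mem_setMul_iff_exists_mul_inv_mem]
  constructor
  · rintro ⟨b, hb, hwb, hmem⟩
    exact ⟨⟨(w, b), hwb⟩, ⟨hb, hmem⟩, rfl⟩
  · rintro ⟨⟨⟨w, b⟩, hwb⟩, ⟨hb, hmem⟩, rfl⟩
    exact ⟨b, hb, hwb, hmem⟩

lemma isOpen_inv_image (hD : D.IsAmpleGroupoid) {T : Set G} (hT : IsOpen T) :
    IsOpen (D.inv '' T) := by
  rw [image_eq_preimage_of_inverse hD.inv_inv hD.inv_inv]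
  exact hT.preimage hD.continuous_inv

lemma mem_invMulSelf (hD : D.IsAmpleGroupoid) {T : Set G} {w : G} :
    w ∈ D.invMulSelf T ↔ ∃ a ∈ T, ∃ b ∈ T, D.range a = D.range b ∧ w = D.mul (D.inv a) b := by
  simp only [invMulSelf, setMul, exists_mem_image, mem_ofPred_eq, hD.source_inv]

lemma isSubgroupoid_invMulSelf (hD : D.IsAmpleGroupoid) {T : Set G} (hT : InjOn D.source T) :
    D.IsSubgroupoid (D.invMulSelf T) where
  inv_mem g hg := by
    obtain ⟨a, ha, b, hb, hab, rfl⟩ := hD.mem_invMulSelf.1 hg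
    refine hD.mem_invMulSelf.2 ⟨b, hb, a, ha, hab.symm, ?_⟩
    rw [hD.mul_inv_rev (by rwa [hD.source_inv]), hD.inv_inv]
  mul_mem g h hg hh hgh := by
    obtain ⟨a, ha, b, hb, hab, rfl⟩ := hD.mem_invMulSelf.1 hg
    obtain ⟨c, hc, e, he, hce, rfl⟩ := hD.mem_invMulSelf.1 hh
    have hab' : D.source (D.inv a) = D.range b := by rwa [hD.source_inv]
    have hce' : D.source (D.inv c) = D.range e := by rwa [hD.source_inv]
    rw [hD.source_mul _ _ hab', hD.range_mul _ _ hce', hD.range_inv] at hgh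
    obtain rfl : b = c := hT hb hc hgh
    refine hD.mem_invMulSelf.2 ⟨a, ha, e, he, hab.trans hce, ?_⟩
    rw [← hD.mul_assoc _ _ _ (by rw [hD.source_mul _ _ hab', hD.range_inv]) hce',
      hD.mul_inv_cancel_right hab']

lemma isCompactOpenSubgroupoid_invMulSelf (hD : D.IsAmpleGroupoid) {T : Set G} (hTc : IsCompact T)
    (hTo : IsOpen T) (hT : InjOn D.source T) :
    D.IsCompactOpenSubgroupoid (D.invMulSelf T) where
  toIsSubgroupoid := hD.isSubgroupoid_invMulSelf hT
  isCompact := hD.isCompact_setMul (hTc.image hD.continuous_inv) hTc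
  isOpen := hD.isOpen_setMul (hD.isOpen_inv_image hTo) hTo

lemma range_fibre_inter_subset_invMulSelf (hD : D.IsAmpleGroupoid) {K V : Set G} {x : G}
    (hxK : x ∈ K) (hxV : x ∈ V) :
    {g | D.range g = x} ∩ K ⊆ D.invMulSelf (K ∩ D.range ⁻¹' V) := by
  rintro g ⟨rfl, hgK⟩
  have hrange := hD.range_unit _ (hD.range_mem g)
  refine hD.mem_invMulSelf.2
    ⟨D.range g, ⟨hxK, by rwa [mem_preimage, hrange]⟩, g, ⟨hgK, hxV⟩, hrange, ?_⟩
  rw [hD.inv_of_mem_unitSpace (hD.range_mem g), hD.unit_mul]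

lemma exists_isCompact_isOpen_injOn_source (hD : D.IsAmpleGroupoid) (hP : D.IsPrincipal) {K : Set G}
    (hK : IsCompact K) (x : G) :
    ∃ V ∈ 𝓝 x, IsCompact V ∧ IsOpen V ∧ InjOn D.source (K ∩ D.range ⁻¹' V) := by
  have := hD.t2
  have hfibre : InjOn D.source (K ∩ D.range ⁻¹' {x}) := fun g hg h hh hsource ↦
    hD.eq_of_source_eq_of_range_eq hP hsource (hg.2.trans hh.2.symm)
  obtain ⟨U, hU, hinj⟩ :=
    exists_mem_nhds_injOn_inter_preimage hD.etale_source.isLocallyInjective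
      hD.etale_source.continuous hD.etale_range.continuous hK hfibre
  obtain ⟨V, hxV, hVU, hVo, hVc, -⟩ :=
    hD.ample x (interior U) isOpen_interior (mem_interior_iff_mem_nhds.2 hU)
  exact ⟨V, hVo.mem_nhds hxV, hVc, hVo,
    hinj.mono (inter_subset_inter_right K (preimage_mono (hVU.trans interior_subset)))⟩

lemma exists_colouring_of_fin (hD : D.IsAmpleGroupoid) {n : ℕ} {A : Fin n → Set G}
    (hA : ∀ i, D.IsCompactOpenSubgroupoid (A i)) (hcover : D.unitSpace ⊆ ⋃ i, A i) :
    ∃ C : D.Colouring n, ∀ i, ∃ j, C.sub j = A i := by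
  -- `Colouring n` has `n + 1` colours; the empty one pads the family.
  have hcons : ∀ i, D.IsCompactOpenSubgroupoid (Fin.cons (α := fun _ ↦ Set G) ∅ A i) :=
    Fin.cases isCompactOpenSubgroupoid_empty hA
  refine ⟨
    { sub := Fin.cons ∅ A
      isCompact := fun i ↦ (hcons i).isCompact
      isOpen := fun i ↦ (hcons i).isOpen
      inv_mem := fun i ↦ (hcons i).inv_mem
      mul_mem := fun i ↦ (hcons i).mul_mem
      source_mem := fun i g hg ↦ hD.inv_mul g ▸
        (hcons i).mul_mem _ _ ((hcons i).inv_mem g hg) hg (hD.source_inv g)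
      range_mem := fun i g hg ↦ hD.mul_inv g ▸
        (hcons i).mul_mem _ _ hg ((hcons i).inv_mem g hg) (hD.range_inv g).symm
      covers := fun x hx ↦ ?_ }, fun i ↦ ⟨i.succ, rfl⟩⟩
  obtain ⟨i, hi⟩ := mem_iUnion.1 (hcover hx)
  exact mem_iUnion.2 ⟨i.succ, hi, hx⟩

lemma exists_colouring_isLebesgue_of_finite (hD : D.IsAmpleGroupoid) {ι : Type*} [Finite ι]
    {A : ι → Set G} {K : Set G} (hA : ∀ i, D.IsCompactOpenSubgroupoid (A i))
    (hK : D.unitSpace ⊆ K)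
    (hLebesgue : ∀ x ∈ D.unitSpace, ∃ i, {g | D.range g = x} ∩ K ⊆ A i) :
    ∃ (d : ℕ) (C : D.Colouring d), C.IsLebesgue K := by
  obtain ⟨n, ⟨e⟩⟩ := Finite.exists_equiv_fin ι
  have hcover : D.unitSpace ⊆ ⋃ j, A (e.symm j) := fun x hx ↦ by
    obtain ⟨i, hi⟩ := hLebesgue x hx
    exact mem_iUnion.2 ⟨e i, by simpa using hi ⟨hD.range_unit x hx, hK hx⟩⟩
  obtain ⟨C, hC⟩ := hD.exists_colouring_of_fin (fun j ↦ hA (e.symm j)) hcover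
  refine ⟨n, C, fun x hx ↦ ?_⟩
  obtain ⟨i, hi⟩ := hLebesgue x hx
  obtain ⟨j, hj⟩ := hC (e i)
  exact ⟨j, by simpa [hj] using hi⟩

lemma exists_colouring_isLebesgue_of_locally (hD : D.IsAmpleGroupoid) (hcpt : IsCompact D.unitSpace)
    {K : Set G} (hK : D.unitSpace ⊆ K)
    (hloc : ∀ x ∈ D.unitSpace, ∃ V ∈ 𝓝 x, ∃ A, D.IsCompactOpenSubgroupoid A ∧
      ∀ y ∈ V ∩ D.unitSpace, {g | D.range g = y} ∩ K ⊆ A) :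
    ∃ (d : ℕ) (C : D.Colouring d), C.IsLebesgue K := by
  choose V hV A hA hVA using hloc
  obtain ⟨t, ht⟩ := hcpt.elim_nhds_subcover' V hV
  refine hD.exists_colouring_isLebesgue_of_finite (fun x : t ↦ hA x.1 x.1.2) hK fun y hy ↦ ?_
  obtain ⟨x, hxt, hyx⟩ := mem_iUnion₂.1 (ht hy)
  exact ⟨⟨x, hxt⟩, hVA x x.2 y ⟨hyx, hy⟩⟩

end IsAmpleGroupoid

end GroupoidData

/-- Let `G` be a principal ample groupoid with compact unit space, and let `K` be a compact
open subset of `G` containing `G⁰`.  Then there exists a `K`-Lebesgue colouring of `G`. -/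
theorem exists_lebesgue_colouring_of_principal
    {G : Type u} [TopologicalSpace G] (D : GroupoidData G)
    (hAmple : D.IsAmpleGroupoid) (hPrincipal : D.IsPrincipal)
    (hcpt : IsCompact D.unitSpace)
    (K : Set G) (hKc : IsCompact K) (hKo : IsOpen K) (hKu : D.unitSpace ⊆ K) :
    ∃ (d : ℕ) (C : D.Colouring d), C.IsLebesgue K := by
  refine hAmple.exists_colouring_isLebesgue_of_locally hcpt hKu fun x _ ↦ ?_
  obtain ⟨V, hxV, hVc, hVo, hinj⟩ :=
    hAmple.exists_isCompact_isOpen_injOn_source hPrincipal hKc x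
  have := hAmple.t2
  have hrange := hAmple.etale_range.continuous
  have hcompact : IsCompact (K ∩ D.range ⁻¹' V) := hKc.inter_right (hVc.isClosed.preimage hrange)
  have hopen : IsOpen (K ∩ D.range ⁻¹' V) := hKo.inter (hVo.preimage hrange)
  exact ⟨V, hxV, D.invMulSelf (K ∩ D.range ⁻¹' V),
    hAmple.isCompactOpenSubgroupoid_invMulSelf hcompact hopen hinj,
    fun y hy ↦ hAmple.range_fibre_inter_subset_invMulSelf (hKu hy.2) hy.1⟩
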